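/- Let M = (Q, A, τ) be a self-invertible Mealy automaton and let a ∈ A be a letter such that the orbit P_M·a^ω = { s·a^ω : s ∈ Q* } is infinite. Then there exist words x, y ∈ A* whose ~D-equivalence classes freely generate a free subsemigroup of rank two in D'_M = A*/~D. -/

import Mathlib

/-!
Let `L = Lan(a)`, the words `s · aⁿ` with `s ∈ Q*`. The group `P_M` is transitive on each level
of `L`, and `L` is closed under factors, so the number of one-letter continuations of a word of
`L` is non-increasing in its length. Once it is constant, the continuations of a word depend only
on its last `K` letters (`exists_memory`).

Write `u ≡ v` (`EQ`) if `u ~D v` and `u`, `v` have equal length and the same continuations in `L`.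
As `P_M` is a group, `≡` is `P_M`-invariant (`DE.act`, `EQ.act`). For `z v ∈ L` let `C_z(v)` (`CC`)
be the set of letters `c` with `z v ≡ z c w` for some `w`. It grows when `v` is extended to the
right or `z` to the left, and by transitivity its size depends only on `|z|` and `|v|`. Hence for
suitable `k ≥ K` and `n`, it depends only on the last `k` letters of `z` and the first `n` letters
of `v` (`exists_stable`).

If `C_z(v)` contained every continuation of `z`, any word of `L` could be rewritten modulo `≡`,
letter by letter, so as to follow a path fixed by its first `k` letters, except for its last `n`
letters. Then the numbers of `~D`-classes in the levels of `L` would be bounded. The map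
`s ↦ s @ a^N` is computed by a transducer whose states are these classes, so two such maps would
coincide, that is `a^i ~D a^j` with `i < j` (`exists_DE_of_full`, `exists_DE_of_bounded`), and all
points in the orbit of `a^ω` would have a common preperiod and period, making the orbit finite
(`orbit_finite`). So some continuation `c` of `z` lies outside `C_z(v)` (`exists_separated`).

Finally choose `z` recurrent (`exists_recurrent`), and complete `v` and `c` to loops `v v'` and
`c c'` from `z` back to `z`. The words `x = v v' c c'` and `y = c c' v v'` work: if two distinct
words in `x, y` of the same length were `~D`-equivalent, then at the first place where they differ,
preceded by some `Z ∈ L` ending in `z`, there would be `Z v ⋯ ≡ Z c ⋯`, contradicting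
`c ∉ C_z(v) = C_Z(v ⋯)`. Words of different lengths reduce to this case
(`isFreePair_of_same_length`).
-/


namespace AutGrp

/-- A Mealy automaton with state set `Q` and alphabet `A`:
`step q a = (q · a, q @ a)` (output letter, next state). -/
structure Mealy (Q A : Type*) where
  step : Q → A → A × Q

namespace Mealy

variable {Q A : Type*}

/-- The output letter `q · a`. -/
def o (M : Mealy Q A) (q : Q) (a : A) : A := (M.step q a).1

/-- The next state `q @ a`. -/
def t (M : Mealy Q A) (q : Q) (a : A) : Q := (M.step q a).2

/-- Action of a single state on a word of letters: `q · w`. -/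
def actA (M : Mealy Q A) : Q → List A → List A
  | _, [] => []
  | q, a :: w => M.o q a :: M.actA (M.t q a) w

/-- State reached from `q` after reading the word `w`: `q @ w`. -/
def stA (M : Mealy Q A) : Q → List A → Q
  | q, [] => q
  | q, a :: w => M.stA (M.t q a) w

/-- Action of a word of states on a word of letters: `s · u` (rightmost state acts first). -/
def actW (M : Mealy Q A) : List Q → List A → List A
  | [], u => u
  | q :: s, u => M.actA q (M.actW s u)

/-- Word of states reached after reading `u`: `s @ u`. -/
def stW (M : Mealy Q A) : List Q → List A → List Q
  | [], _ => []
  | q :: s, u => M.stA q (M.actW s u) :: M.stW s u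

/-- `M` is invertible if each state acts on `A` by a bijection. -/
def Invertible (M : Mealy Q A) : Prop := ∀ q : Q, Function.Bijective (M.o q)

/-- `M` is reversible if each letter acts on `Q` by a bijection. -/
def Reversible (M : Mealy Q A) : Prop := ∀ a : A, Function.Bijective (fun q => M.t q a)

theorem actA_append (M : Mealy Q A) (q : Q) (x y : List A) :
    M.actA q (x ++ y) = M.actA q x ++ M.actA (M.stA q x) y := by
  induction x generalizing q with
  | nil => simp [actA, stA]
  | cons a w ih => simp [actA, stA, ih]

theorem stA_append (M : Mealy Q A) (q : Q) (x y : List A) :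
    M.stA q (x ++ y) = M.stA (M.stA q x) y := by
  induction x generalizing q with
  | nil => simp [stA]
  | cons a w ih => simp [stA, ih]

theorem actW_append_states (M : Mealy Q A) (s u : List Q) (w : List A) :
    M.actW (s ++ u) w = M.actW s (M.actW u w) := by
  induction s with
  | nil => simp [actW]
  | cons q s ih => simp [actW, ih]

theorem actW_append (M : Mealy Q A) (s : List Q) (x y : List A) :
    M.actW s (x ++ y) = M.actW s x ++ M.actW (M.stW s x) y := by
  induction s with
  | nil => simp [actW, stW]
  | cons q s ih => simp [actW, stW, ih, actA_append]

theorem stW_append (M : Mealy Q A) (s : List Q) (x y : List A) :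
    M.stW s (x ++ y) = M.stW (M.stW s x) y := by
  induction s with
  | nil => simp [stW]
  | cons q s ih => simp [stW, actW, ih, actW_append, stA_append]

theorem actW_stW_congr (M : Mealy Q A) {p p' : List Q}
    (h : ∀ w : List A, M.actW p w = M.actW p' w) (u w : List A) :
    M.actW (M.stW p u) w = M.actW (M.stW p' u) w := by
  have h1 := M.actW_append p u w
  have h2 := M.actW_append p' u w
  rw [h u, h (u ++ w)] at h1
  rw [h1] at h2
  exact List.append_cancel_left h2

/-- The congruence `~Q` on the free monoid `Q*`: two words of states are equivalent
iff they act identically on `A*`. -/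
def conQ (M : Mealy Q A) : Con (FreeMonoid Q) where
  r s u := ∀ w : List A, M.actW s.toList w = M.actW u.toList w
  iseqv := ⟨fun _ _ => rfl, fun h w => (h w).symm, fun h1 h2 w => (h1 w).trans (h2 w)⟩
  mul' := by
    intro a b c d h1 h2 w
    simp only [FreeMonoid.toList_mul, actW_append_states]
    rw [h2 w, h1 (M.actW d.toList w)]

/-- The congruence `~A` on the free monoid `A*`: `u ~A v` iff `s @ u = s @ v` for all `s ∈ Q*`. -/
def conA (M : Mealy Q A) : Con (FreeMonoid A) where
  r u v := ∀ s : List Q, M.stW s u.toList = M.stW s v.toList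
  iseqv := ⟨fun _ _ => rfl, fun h s => (h s).symm, fun h1 h2 s => (h1 s).trans (h2 s)⟩
  mul' := by
    intro a b c d h1 h2 s
    simp only [FreeMonoid.toList_mul, stW_append]
    rw [h1 s, h2 (M.stW s b.toList)]

/-- The congruence `~D` on the free monoid `A*`: `u ~D v` iff `s @ u ~Q s @ v` for all `s ∈ Q*`. -/
def conD (M : Mealy Q A) : Con (FreeMonoid A) where
  r u v := ∀ (s : List Q) (w : List A),
    M.actW (M.stW s u.toList) w = M.actW (M.stW s v.toList) w
  iseqv := ⟨fun _ _ _ => rfl, fun h s w => (h s w).symm,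
    fun h1 h2 s w => (h1 s w).trans (h2 s w)⟩
  mul' := by
    intro a b c d h1 h2 s w
    simp only [FreeMonoid.toList_mul, stW_append]
    calc M.actW (M.stW (M.stW s a.toList) c.toList) w
        = M.actW (M.stW (M.stW s b.toList) c.toList) w :=
          M.actW_stW_congr (h1 s) c.toList w
      _ = M.actW (M.stW (M.stW s b.toList) d.toList) w := h2 _ w

/-- The automaton semigroup (monoid) `P_M = Q* / ~Q`. -/
abbrev PM (M : Mealy Q A) : Type _ := M.conQ.Quotient

/-- The dual automaton semigroup (monoid) `D_M = A* / ~A`. -/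
abbrev DM (M : Mealy Q A) : Type _ := M.conA.Quotient

/-- The monoid `D'_M = A* / ~D`. -/
abbrev DM' (M : Mealy Q A) : Type _ := M.conD.Quotient

/-- The class in `P_M` of a word of states. -/
def PMmk (M : Mealy Q A) (s : List Q) : M.PM := M.conQ.mk' (FreeMonoid.ofList s)

/-- The class in `D_M` of a word of letters. -/
def DMmk (M : Mealy Q A) (u : List A) : M.DM := M.conA.mk' (FreeMonoid.ofList u)

/-- The class in `D'_M` of a word of letters. -/
def DM'mk (M : Mealy Q A) (u : List A) : M.DM' := M.conD.mk' (FreeMonoid.ofList u)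

/-- `M` is self-invertible if `P_M` is a group. -/
def SelfInvertible (M : Mealy Q A) : Prop :=
  ∀ x : M.PM, ∃ y : M.PM, x * y = 1 ∧ y * x = 1

/-- The enriched automaton of an invertible automaton: states `Q ⊕ Q`, where `Sum.inl q` is `q`
and `Sum.inr q` is the formal inverse `q⁻¹`; `τ̃(q,a) = τ(q,a)` and
`τ̃(q⁻¹, q·a) = (a, (q@a)⁻¹)`. -/
noncomputable def enriched [Nonempty A] (M : Mealy Q A) : Mealy (Q ⊕ Q) A where
  step := fun p b =>
    match p with
    | Sum.inl q => (M.o q b, Sum.inl (M.t q b))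
    | Sum.inr q =>
        (Function.invFun (M.o q) b, Sum.inr (M.t q (Function.invFun (M.o q) b)))

/-- The monoid `Δ_M` presented by generators `Q ⊔ A` and relations `q a = (q·a)(q@a)`. -/
def deltaCon (M : Mealy Q A) : Con (FreeMonoid (Q ⊕ A)) :=
  conGen (fun w₁ w₂ => ∃ (q : Q) (a : A),
    w₁ = FreeMonoid.of (Sum.inl q) * FreeMonoid.of (Sum.inr a) ∧
    w₂ = FreeMonoid.of (Sum.inr (M.o q a)) * FreeMonoid.of (Sum.inl (M.t q a)))

end Mealy

/-- Evaluation of a positive word in the letters `y` (for `true`) and `z` (for `false`). -/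
def evalPair {S : Type*} [Monoid S] (y z : S) : List Bool → S
  | [] => 1
  | b :: l => (bif b then y else z) * evalPair y z l

/-- `y` and `z` freely generate a free subsemigroup of rank two: distinct nonempty
positive words in `y, z` represent distinct elements. -/
def IsFreePair {S : Type*} [Monoid S] (y z : S) : Prop :=
  ∀ l₁ l₂ : List Bool, l₁ ≠ [] → l₂ ≠ [] →
    evalPair y z l₁ = evalPair y z l₂ → l₁ = l₂

/-- `x` has infinite order: `{x, x², x³, …}` is infinite. -/
def InfiniteOrder {S : Type*} [Monoid S] (x : S) : Prop :=
  (Set.range fun n : ℕ => x ^ (n + 1)).Infinite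

/-- The length-`n` prefix of a sequence. -/
def seqTake {A : Type*} (ξ : ℕ → A) (n : ℕ) : List A := (List.range n).map ξ

/-- The `n`-th power `u^n` of a finite word. -/
def wpow {A : Type*} (u : List A) : ℕ → List A
  | 0 => []
  | n + 1 => u ++ wpow u n

/-- The eventually periodic sequence `u v v v ⋯`. -/
noncomputable def prePeriodic {A : Type*} [Nonempty A] (u v : List A) : ℕ → A :=
  fun n => if n < u.length then u.getD n (Classical.arbitrary A)
    else v.getD ((n - u.length) % v.length) (Classical.arbitrary A)

/-- The periodic sequence `u^ω = u u u ⋯`. -/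
noncomputable def periodic {A : Type*} [Nonempty A] (u : List A) : ℕ → A :=
  prePeriodic [] u

namespace Mealy

/-- The action of a word of states on a sequence: `s · ξ` is the sequence whose
length-`n` prefix is `s · (length-`n` prefix of `ξ`)`. -/
noncomputable def actSeq {Q A : Type*} [Nonempty A] (M : Mealy Q A)
    (s : List Q) (ξ : ℕ → A) : ℕ → A :=
  fun n => (M.actW s (seqTake ξ (n + 1))).getD n (Classical.arbitrary A)

/-- The language of all prefixes of the orbit of `a^ω` under `P_M`. -/
def Lan {Q A : Type*} (M : Mealy Q A) (a : A) : Set (List A) :=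
  {v | ∃ (k : ℕ) (s : List Q), v = M.actW s (List.replicate k a)}

/-- The degree of `v` in `Lan(a)`: the number of letters `b` with `v b ∈ Lan(a)`. -/
noncomputable def deg {Q A : Type*} (M : Mealy Q A) (a : A) (v : List A) : ℕ :=
  {b : A | v ++ [b] ∈ M.Lan a}.ncard

end Mealy

/-- A language is regular if it is recognized by a deterministic finite automaton. -/
def IsRegular {A : Type*} (L : Set (List A)) : Prop :=
  ∃ (σ : Type) (_ : Fintype σ) (dfa : DFA A σ), ∀ w : List A, w ∈ dfa.accepts ↔ w ∈ L


namespace Mealy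

/-! ### The group `P_M` acts on `A*` modulo `~D` -/

section Basic

variable {Q A : Type*}

theorem actA_length (M : Mealy Q A) (q : Q) (u : List A) : (M.actA q u).length = u.length := by
  induction u generalizing q with
  | nil => rfl
  | cons b w ih => simp [actA, ih]

theorem actW_length (M : Mealy Q A) (s : List Q) (u : List A) :
    (M.actW s u).length = u.length := by
  induction s with
  | nil => rfl
  | cons q s ih => simp [actW, actA_length, ih]

/-- The section rule `(ts) @ u = (t @ (s · u)) (s @ u)`. -/
theorem stW_append_states (M : Mealy Q A) (t s : List Q) (u : List A) :
    M.stW (t ++ s) u = M.stW t (M.actW s u) ++ M.stW s u := by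
  induction t with
  | nil => simp [stW]
  | cons q t ih => simp [stW, ih, actW_append_states]

theorem exists_inv (M : Mealy Q A) (hg : M.SelfInvertible) (s : List Q) :
    ∃ t : List Q, (∀ w, M.actW t (M.actW s w) = w) ∧ ∀ w, M.actW s (M.actW t w) = w := by
  obtain ⟨y, h1, h2⟩ := hg (M.PMmk s)
  obtain ⟨t, rfl⟩ := Con.mk'_surjective y
  have h1' : M.conQ (FreeMonoid.ofList s * t) 1 := by
    rw [← Con.eq]; exact h1
  have h2' : M.conQ (t * FreeMonoid.ofList s) 1 := by
    rw [← Con.eq]; exact h2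
  refine ⟨t.toList, fun w => ?_, fun w => ?_⟩
  · have := h2' w
    simpa [actW_append_states, actW] using this
  · have := h1' w
    simpa [actW_append_states, actW] using this

theorem actW_injective (M : Mealy Q A) (hg : M.SelfInvertible) (s : List Q) :
    Function.Injective (M.actW s) := by
  obtain ⟨t, h, _⟩ := M.exists_inv hg s
  exact Function.LeftInverse.injective h

theorem actW_surjective (M : Mealy Q A) (hg : M.SelfInvertible) (s : List Q) :
    Function.Surjective (M.actW s) := by
  obtain ⟨t, _, h⟩ := M.exists_inv hg s
  exact fun w => ⟨_, h w⟩

/-- The relation `u ~D v`, on plain lists. -/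
def DE (M : Mealy Q A) (u v : List A) : Prop :=
  ∀ (s : List Q) (w : List A), M.actW (M.stW s u) w = M.actW (M.stW s v) w

theorem DM'mk_eq_iff (M : Mealy Q A) (u v : List A) :
    M.DM'mk u = M.DM'mk v ↔ M.DE u v := by
  unfold DM'mk
  exact Con.eq _

theorem DE.refl (M : Mealy Q A) (u : List A) : M.DE u u := fun _ _ => rfl

theorem DE.symm {M : Mealy Q A} {u v : List A} (h : M.DE u v) : M.DE v u :=
  fun s w => (h s w).symm

theorem DE.trans {M : Mealy Q A} {u v x : List A} (h : M.DE u v) (h' : M.DE v x) : M.DE u x :=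
  fun s w => (h s w).trans (h' s w)

theorem DE.append {M : Mealy Q A} {u v x y : List A} (huv : M.DE u v) (hxy : M.DE x y) :
    M.DE (u ++ x) (v ++ y) :=
  M.conD.mul (w := FreeMonoid.ofList u) (x := FreeMonoid.ofList v)
    (y := FreeMonoid.ofList x) (z := FreeMonoid.ofList y) huv hxy

/-- `~D` is invariant under the group `P_M`: in `t @ (s · u) = ((ts) @ u) (s @ u)⁻¹` the right
side depends only on the `~D`-class of `u`. -/
theorem DE.act {M : Mealy Q A} (hg : M.SelfInvertible) {u v : List A} (h : M.DE u v)
    (s : List Q) : M.DE (M.actW s u) (M.actW s v) := by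
  intro t w
  obtain ⟨w', rfl⟩ := M.actW_surjective hg (M.stW s u) w
  have h1 := h (t ++ s) w'
  rw [stW_append_states, stW_append_states, actW_append_states, actW_append_states, ← h s w'] at h1
  exact h1

end Basic

/-! ### The language of the orbit -/

section Language

variable {Q A : Type*}

theorem mem_Lan_iff (M : Mealy Q A) (a : A) (u : List A) :
    u ∈ M.Lan a ↔ ∃ s : List Q, u = M.actW s (List.replicate u.length a) := by
  constructor
  · rintro ⟨k, s, h⟩
    have : u.length = k := by rw [h, actW_length, List.length_replicate]
    exact ⟨s, by rw [this]; exact h⟩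
  · rintro ⟨s, h⟩
    exact ⟨_, s, h⟩

theorem replicate_mem_Lan (M : Mealy Q A) (a : A) (n : ℕ) : List.replicate n a ∈ M.Lan a :=
  ⟨n, [], rfl⟩

theorem Lan_append (M : Mealy Q A) (a : A) {u v : List A} (h : u ++ v ∈ M.Lan a) :
    u ∈ M.Lan a ∧ v ∈ M.Lan a := by
  obtain ⟨s, hs⟩ := (M.mem_Lan_iff a _).1 h
  rw [List.length_append, List.replicate_add, actW_append] at hs
  obtain ⟨h1, h2⟩ := List.append_inj hs (by simp [actW_length])
  exact ⟨⟨_, _, h1⟩, ⟨_, _, h2⟩⟩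

theorem Lan_act (M : Mealy Q A) (a : A) {u : List A} (h : u ∈ M.Lan a) (s : List Q) :
    M.actW s u ∈ M.Lan a := by
  obtain ⟨k, t, rfl⟩ := h
  exact ⟨k, s ++ t, by rw [actW_append_states]⟩

theorem Lan_act_iff (M : Mealy Q A) (hg : M.SelfInvertible) (a : A) (u : List A) (s : List Q) :
    M.actW s u ∈ M.Lan a ↔ u ∈ M.Lan a := by
  refine ⟨fun h => ?_, fun h => M.Lan_act a h s⟩
  obtain ⟨t, ht, _⟩ := M.exists_inv hg s
  have := M.Lan_act a h t
  rwa [ht] at this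

theorem Lan_transitive (M : Mealy Q A) (hg : M.SelfInvertible) (a : A) {u v : List A}
    (hu : u ∈ M.Lan a) (hv : v ∈ M.Lan a) (h : u.length = v.length) :
    ∃ s : List Q, M.actW s u = v := by
  obtain ⟨s, hs⟩ := (M.mem_Lan_iff a _).1 hu
  obtain ⟨t, ht⟩ := (M.mem_Lan_iff a _).1 hv
  obtain ⟨s', hs', _⟩ := M.exists_inv hg s
  refine ⟨t ++ s', ?_⟩
  rw [actW_append_states, hs, hs', h, ← ht]

/-- The one-letter words `p` such that `z p` is still in the language. -/
def Ch (M : Mealy Q A) (a : A) (z : List A) : Set (List A) :=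
  {p | p.length = 1 ∧ z ++ p ∈ M.Lan a}

theorem finite_of_length [Finite A] {S : Set (List A)} (k : ℕ) (h : ∀ p ∈ S, p.length = k) :
    S.Finite :=
  (List.finite_length_eq A k).subset h

theorem Ch_finite [Finite A] (M : Mealy Q A) (a : A) (z : List A) : (M.Ch a z).Finite :=
  finite_of_length 1 fun _ hp => hp.1

theorem Ch_ncard_le [Finite A] (M : Mealy Q A) (hg : M.SelfInvertible) (a : A) {z z' : List A}
    (hz : z ∈ M.Lan a) (hz' : z' ∈ M.Lan a) (h : z.length = z'.length) :
    (M.Ch a z).ncard ≤ (M.Ch a z').ncard := by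
  obtain ⟨s, rfl⟩ := M.Lan_transitive hg a hz hz' h
  refine Set.ncard_le_ncard_of_injOn (M.actW (M.stW s z)) ?_
    (M.actW_injective hg _).injOn (M.Ch_finite a _)
  rintro p ⟨h1, h2⟩
  refine ⟨by rw [actW_length, h1], ?_⟩
  rw [← actW_append]
  exact M.Lan_act a h2 s

/-- Beyond some length `K`, which words may follow `z` in the language does not depend on what
precedes `z`. The number of one-letter continuations depends only on the length (`P_M` is
transitive on each level) and does not increase with it (the language is closed under
suffixes), so it is eventually constant. -/
theorem exists_memory [Finite A] (M : Mealy Q A) (hg : M.SelfInvertible) (a : A) :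
    ∃ K : ℕ, ∀ y z w : List A, K ≤ z.length → y ++ z ∈ M.Lan a →
      (y ++ z ++ w ∈ M.Lan a ↔ z ++ w ∈ M.Lan a) := by
  have hmono : ∀ y z : List A, M.Ch a (y ++ z) ⊆ M.Ch a z := by
    rintro y z p ⟨h1, h2⟩
    rw [List.append_assoc] at h2
    exact ⟨h1, (M.Lan_append a h2).2⟩
  let f : ℕ → ℕ := fun n => (M.Ch a (List.replicate n a)).ncard
  obtain ⟨K, -, hK⟩ := (measure f).wf.has_min Set.univ ⟨0, trivial⟩
  have hanti : ∀ z : List A, z ∈ M.Lan a → K ≤ z.length → (M.Ch a z).ncard ≤ f K := by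
    intro z hz hl
    obtain ⟨j, hj⟩ := Nat.exists_eq_add_of_le' hl
    refine (M.Ch_ncard_le hg a hz (M.replicate_mem_Lan a z.length) (by simp)).trans ?_
    rw [hj, List.replicate_add]
    exact Set.ncard_le_ncard (hmono _ _) (M.Ch_finite a _)
  have hge : ∀ z : List A, z ∈ M.Lan a → f K ≤ (M.Ch a z).ncard := by
    intro z hz
    refine le_trans ?_ (M.Ch_ncard_le hg a (M.replicate_mem_Lan a z.length) hz (by simp))
    exact not_lt.1 (hK z.length trivial)
  have hCh : ∀ y z : List A, K ≤ z.length → y ++ z ∈ M.Lan a → M.Ch a (y ++ z) = M.Ch a z := by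
    intro y z hl h
    refine Set.eq_of_subset_of_ncard_le (hmono y z) ?_ (M.Ch_finite a _)
    exact (hanti z (M.Lan_append a h).2 hl).trans (hge _ h)
  refine ⟨K, fun y z w hl h => ⟨fun h' => ?_, fun h' => ?_⟩⟩
  · rw [List.append_assoc] at h'
    exact (M.Lan_append a h').2
  · induction w generalizing z with
    | nil => simpa using h
    | cons c w ih =>
      have e : z ++ c :: w = (z ++ [c]) ++ w := by simp
      rw [e] at h'
      have hc : [c] ∈ M.Ch a z := ⟨rfl, (M.Lan_append a h').1⟩
      rw [← hCh y z hl h] at hc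
      have := ih (z ++ [c]) (by simp; omega) (by simpa using hc.2) h'
      simpa using this

/-- The refinement `u ≡ v` of `~D`: the words have the same length and the same continuations in
the language. Unlike `~D`, it persists inside the language under right extension. -/
def EQ (M : Mealy Q A) (a : A) (u v : List A) : Prop :=
  u.length = v.length ∧ (∀ w, u ++ w ∈ M.Lan a ↔ v ++ w ∈ M.Lan a) ∧ M.DE u v

theorem EQ.trans {M : Mealy Q A} {a : A} {u v x : List A} (h : M.EQ a u v) (h' : M.EQ a v x) :
    M.EQ a u x :=
  ⟨h.1.trans h'.1, fun w => (h.2.1 w).trans (h'.2.1 w), h.2.2.trans h'.2.2⟩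

theorem EQ.mem {M : Mealy Q A} {a : A} {u v : List A} (h : M.EQ a u v) (hu : u ∈ M.Lan a) :
    v ∈ M.Lan a := by
  simpa using (h.2.1 []).1 (by simpa using hu)

theorem EQ.append_right {M : Mealy Q A} {a : A} {u v : List A} (h : M.EQ a u v) (x : List A) :
    M.EQ a (u ++ x) (v ++ x) :=
  ⟨by simp [h.1], fun w => by simpa using h.2.1 (x ++ w), h.2.2.append (DE.refl M x)⟩

theorem EQ.act {M : Mealy Q A} (hg : M.SelfInvertible) {a : A} {u v : List A} (h : M.EQ a u v)
    (s : List Q) : M.EQ a (M.actW s u) (M.actW s v) := by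
  refine ⟨by simp [actW_length, h.1], fun w => ?_, h.2.2.act hg s⟩
  obtain ⟨w, rfl⟩ := M.actW_surjective hg (M.stW s u) w
  rw [← actW_append, h.2.2 s w, ← actW_append, M.Lan_act_iff hg, M.Lan_act_iff hg]
  exact h.2.1 w

/-- The letters (as one-letter words) that can stand in place of the first letter of `v`, after
the prefix `z`, without leaving the `≡`-class of `z v`. -/
def CC (M : Mealy Q A) (a : A) (z v : List A) : Set (List A) :=
  {p | p.length = 1 ∧ ∃ w, M.EQ a (z ++ v) (z ++ (p ++ w))}

theorem CC_finite [Finite A] (M : Mealy Q A) (a : A) (z v : List A) : (M.CC a z v).Finite :=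
  finite_of_length 1 fun _ hp => hp.1

theorem CC_subset_Ch (M : Mealy Q A) (a : A) {z v : List A} (h : z ++ v ∈ M.Lan a) :
    M.CC a z v ⊆ M.Ch a z := by
  rintro p ⟨h1, w, hw⟩
  refine ⟨h1, ?_⟩
  have := hw.mem h
  rw [← List.append_assoc] at this
  exact (M.Lan_append a this).1

theorem CC_ncard_le [Finite A] (M : Mealy Q A) (hg : M.SelfInvertible) (a : A)
    {z v z' v' : List A} (h : z ++ v ∈ M.Lan a) (h' : z' ++ v' ∈ M.Lan a)
    (hz : z.length = z'.length) (hv : v.length = v'.length) :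
    (M.CC a z v).ncard ≤ (M.CC a z' v').ncard := by
  obtain ⟨s, hs⟩ := M.Lan_transitive hg a h h' (by simp [hz, hv])
  rw [actW_append] at hs
  obtain ⟨rfl, rfl⟩ := List.append_inj hs (by rw [actW_length, hz])
  refine Set.ncard_le_ncard_of_injOn (M.actW (M.stW s z)) ?_
    (M.actW_injective hg _).injOn (M.CC_finite a _ _)
  rintro p ⟨h1, w, hw⟩
  refine ⟨by rw [actW_length, h1], M.actW (M.stW (M.stW s z) p) w, ?_⟩
  rw [← actW_append, ← actW_append, ← actW_append]
  exact hw.act hg s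

theorem CC_mono (M : Mealy Q A) (a : A) {K : ℕ}
    (hK : ∀ y z w : List A, K ≤ z.length → y ++ z ∈ M.Lan a →
      (y ++ z ++ w ∈ M.Lan a ↔ z ++ w ∈ M.Lan a))
    {y z v x : List A} (hz : K ≤ z.length) (h : y ++ z ++ (v ++ x) ∈ M.Lan a) :
    M.CC a z v ⊆ M.CC a (y ++ z) (v ++ x) := by
  rintro p ⟨h1, w, hw⟩
  refine ⟨h1, w ++ x, ?_⟩
  have hyz := (M.Lan_append a h).1
  have e : M.EQ a (z ++ (v ++ x)) (z ++ (p ++ (w ++ x))) := by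
    simpa using hw.append_right x
  refine ⟨by simpa using e.1, fun t => ?_, ?_⟩
  · have h1 := hK y z (v ++ x ++ t) hz hyz
    have h2 := hK y z (p ++ (w ++ x) ++ t) hz hyz
    have h3 := e.2.1 t
    simp only [List.append_assoc] at h1 h2 h3 ⊢
    rw [h1, h2, h3]
  · simpa using (DE.refl M y).append e.2.2

/-- Choosing a prefix length `k` and a length `n` that maximise the size of `CC`, the set
`CC z v` depends only on the last `k` letters of `z` and the first `n` letters of `v`. -/
theorem exists_stable [Finite A] (M : Mealy Q A) (hg : M.SelfInvertible) (a : A) {K : ℕ}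
    (hK : ∀ y z w : List A, K ≤ z.length → y ++ z ∈ M.Lan a →
      (y ++ z ++ w ∈ M.Lan a ↔ z ++ w ∈ M.Lan a)) :
    ∃ k n : ℕ, K ≤ k ∧ ∀ y z v x : List A, z.length = k → v.length = n →
      y ++ z ++ (v ++ x) ∈ M.Lan a → M.CC a (y ++ z) (v ++ x) = M.CC a z v := by
  let S : Set (ℕ × ℕ) := {p | K ≤ p.1}
  let g : ℕ × ℕ → ℕ := fun p => (M.CC a (List.replicate p.1 a) (List.replicate p.2 a)).ncard
  have hfin : {p : List A | p.length = 1}.Finite := List.finite_length_eq A 1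
  have hbd : (g '' S).Finite := by
    refine (Set.finite_Iic ({p : List A | p.length = 1}.ncard)).subset ?_
    rintro _ ⟨p, -, rfl⟩
    exact Set.ncard_le_ncard (fun q hq => hq.1) hfin
  obtain ⟨m, ⟨⟨⟨k, n⟩, hkn, rfl⟩, hmax⟩⟩ :=
    hbd.exists_maximal (⟨_, ⟨(K, 0), le_refl K, rfl⟩⟩ : (g '' S).Nonempty)
  refine ⟨k, n, hkn, fun y z v x hz hv h => ?_⟩
  have hkn : K ≤ k := hkn
  symm
  refine Set.eq_of_subset_of_ncard_le (M.CC_mono a hK (by omega) h) ?_ (M.CC_finite a _ _)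
  have e : List.replicate (y ++ z).length a ++ List.replicate (v ++ x).length a ∈ M.Lan a := by
    rw [← List.replicate_add]; exact M.replicate_mem_Lan a _
  have h1 := M.CC_ncard_le hg a h e (by simp) (by simp)
  have hzv : z ++ v ∈ M.Lan a := by
    have : y ++ (z ++ v) ++ x ∈ M.Lan a := by simpa using h
    exact (M.Lan_append a (M.Lan_append a this).1).2
  have h2 : g (k, n) ≤ (M.CC a z v).ncard := by
    refine M.CC_ncard_le hg a ?_ hzv (by simp [hz]) (by simp [hv])
    rw [← List.replicate_add]; exact M.replicate_mem_Lan a _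
  have h3 : g ((y ++ z).length, (v ++ x).length) ≤ g (k, n) := by
    have hS : ((y ++ z).length, (v ++ x).length) ∈ S := by
      simp only [S, Set.mem_ofPred_eq, List.length_append]; omega
    by_contra hc
    exact hc (hmax ⟨_, hS, rfl⟩ (not_le.1 hc).le)
  exact (h1.trans h3).trans h2

end Language

/-! ### Finite orbits -/

section Finiteness

variable {Q A : Type*}

/-- Output word of a transducer with transition map `st` and output map `out`, started in `σ₀`;
input words are read from the right. The first component is the state reached. -/
def run {S : Type*} (st : Q → S → S) (out : Q → S → Q) (σ₀ : S) : List Q → S × List Q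
  | [] => (σ₀, [])
  | q :: s => (st q (run st out σ₀ s).1, out q (run st out σ₀ s).1 :: (run st out σ₀ s).2)

/-- If the number of `~D`-classes in the `P_M`-orbits of the words `a ^ (N j)` is bounded, two of
these words are `~D`-equivalent. The map `s ↦ s @ a ^ (N j)` is computed by a transducer whose
states represent those classes, and there are finitely many transducers with a given finite
state set. -/
theorem exists_DE_of_bounded [Finite Q] (M : Mealy Q A) (hg : M.SelfInvertible) (a : A)
    {S : Type*} [Finite S] (N : ℕ → ℕ) (r : ℕ → S → List A)
    (hr : ∀ j (s : List Q), ∃ σ, M.DE (M.actW s (List.replicate (N j) a)) (r j σ)) :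
    ∃ i j, i < j ∧ M.DE (List.replicate (N i) a) (List.replicate (N j) a) := by
  classical
  have key : ∀ j, ∃ (T : (Q → S → S) × (Q → S → Q) × S), ∀ s : List Q,
      M.DE (M.actW s (List.replicate (N j) a)) (r j (run T.1 T.2.1 T.2.2 s).1) ∧
      ∀ w, M.actW (M.stW s (List.replicate (N j) a)) w
        = M.actW (run T.1 T.2.1 T.2.2 s).2 w := by
    intro j
    have hst : ∀ (q : Q) (σ : S), ∃ σ', (∃ s : List Q,
        M.DE (M.actW s (List.replicate (N j) a)) (r j σ)) →
        M.DE (M.actW [q] (r j σ)) (r j σ') := by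
      intro q σ
      by_cases hs : ∃ s : List Q, M.DE (M.actW s (List.replicate (N j) a)) (r j σ)
      · obtain ⟨s, hs⟩ := hs
        obtain ⟨σ', hσ'⟩ := hr j ([q] ++ s)
        rw [actW_append_states] at hσ'
        exact ⟨σ', fun _ => (hs.act hg [q]).symm.trans hσ'⟩
      · exact ⟨σ, fun h => absurd h hs⟩
    choose st hst using hst
    obtain ⟨σ₀, hσ₀⟩ := hr j []
    refine ⟨(st, fun q σ => M.stA q (r j σ), σ₀), fun s => ?_⟩
    induction s with
    | nil => exact ⟨hσ₀, fun w => rfl⟩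
    | cons q s ih =>
      obtain ⟨ih1, ih2⟩ := ih
      refine ⟨?_, fun w => ?_⟩
      · exact (ih1.act hg [q]).trans (hst q _ ⟨s, ih1⟩)
      · have := ih1 [q] (M.actW (M.stW s (List.replicate (N j) a)) w)
        simp only [stW, actW] at this
        simp only [stW, actW, run]
        rw [this, ih2]
  choose T hT using key
  obtain ⟨i, j, hij, h⟩ := Finite.exists_ne_map_eq_of_infinite T
  have hDE : M.DE (List.replicate (N i) a) (List.replicate (N j) a) := by
    intro s w
    rw [(hT i s).2, (hT j s).2, h]
  rcases lt_or_gt_of_ne hij with h' | h'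
  · exact ⟨i, j, h', hDE⟩
  · exact ⟨j, i, h', hDE.symm⟩

theorem seqTake_const (a : A) (n : ℕ) : seqTake (fun _ => a) n = List.replicate n a := by
  simp [seqTake, List.map_const']

/-- If `a ^ m ~D a ^ n` with `m < n`, then every point of the orbit of `a ^ ω` has preperiod `m`
and period `n - m`, so the orbit is finite. -/
theorem orbit_finite [Finite A] [Nonempty A] (M : Mealy Q A) (a : A) {m n : ℕ} (hmn : m < n)
    (h : M.DE (List.replicate m a) (List.replicate n a)) :
    {ξ : ℕ → A | ∃ s : List Q, ξ = M.actSeq s (fun _ => a)}.Finite := by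
  have hval : ∀ (s : List Q) (m l : ℕ), M.actSeq s (fun _ => a) (m + l)
      = M.actSeq (M.stW s (List.replicate m a)) (fun _ => a) l := by
    intro s m l
    simp only [actSeq, seqTake_const, add_assoc]
    rw [List.replicate_add, actW_append,
      List.getD_append_right _ _ _ _ (by simp [actW_length])]
    simp [actW_length]
  have hper : ∀ (s : List Q) (l : ℕ), M.actSeq s (fun _ => a) (m + l)
      = M.actSeq s (fun _ => a) (n + l) := by
    intro s l
    rw [hval, hval]
    simp only [actSeq, h s]
  refine Set.Finite.of_injOn (f := fun ξ : ℕ → A => fun i : Fin n => ξ i)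
    (t := Set.univ) (fun _ _ => trivial) ?_ Set.finite_univ
  rintro _ ⟨s, rfl⟩ _ ⟨t, rfl⟩ hst
  funext l
  induction l using Nat.strong_induction_on with
  | _ l ih =>
    by_cases hl : l < n
    · exact congrFun hst ⟨l, hl⟩
    · obtain ⟨i, rfl⟩ := Nat.exists_eq_add_of_le (not_lt.1 hl)
      rw [← hper, ← hper]
      exact ih _ (by omega)

end Finiteness

/-! ### Letters that are never confused -/

section Separation

variable {Q A : Type*}

/-- If every admissible letter could always replace the letter after a long prefix, each word of
the language would be `≡` to one lying, up to its last `n` letters, on a path determined by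
its first `k` letters, so the number of classes would be bounded. -/
theorem exists_DE_of_full [Finite Q] [Fintype A] (M : Mealy Q A) (hg : M.SelfInvertible) (a : A)
    (k n : ℕ)
    (hfull : ∀ Z V p : List A, k ≤ Z.length → n ≤ V.length → Z ++ V ∈ M.Lan a →
      p ∈ M.Ch a Z → ∃ w, M.EQ a (Z ++ V) (Z ++ (p ++ w))) :
    ∃ i j, i < j ∧ M.DE (List.replicate i a) (List.replicate j a) := by
  classical
  have step : ∀ (s : List Q) (j : ℕ) (V : List A), V.length = n + j →
      M.actW s (List.replicate k a) ++ V ∈ M.Lan a →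
      ∃ w : List A, w.length = n ∧ M.EQ a (M.actW s (List.replicate k a) ++ V)
        (M.actW s (List.replicate (k + j) a) ++ w) := by
    intro s j
    induction j with
    | zero => exact fun V hV _ => ⟨V, hV, rfl, fun _ => Iff.rfl, DE.refl M _⟩
    | succ j ih =>
      intro V hV hmem
      obtain ⟨V', b, rfl⟩ : ∃ V' b, V = V' ++ [b] := by
        have : V ≠ [] := by rintro rfl; simp at hV
        exact ⟨_, _, (List.dropLast_append_getLast this).symm⟩
      rw [← List.append_assoc] at hmem ⊢
      obtain ⟨w, hw, h1⟩ := ih V' (by simp at hV; omega) (M.Lan_append a hmem).1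
      have h2 := h1.append_right [b]
      rw [List.append_assoc _ w] at h2
      have e : M.actW s (List.replicate (k + (j + 1)) a) = M.actW s (List.replicate (k + j) a)
          ++ M.actW (M.stW s (List.replicate (k + j) a)) [a] := by
        rw [← actW_append, ← List.replicate_succ', add_assoc]
      obtain ⟨w', h3⟩ := hfull (M.actW s (List.replicate (k + j) a)) (w ++ [b])
        (M.actW (M.stW s (List.replicate (k + j) a)) [a]) (by simp [actW_length])
        (by simp [hw]) (h2.mem hmem)
        ⟨by simp [actW_length], by rw [← e]; exact ⟨_, _, rfl⟩⟩
      refine ⟨w', ?_, ?_⟩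
      · have := h3.1
        simp [actW_length, hw] at this
        omega
      · rw [e, List.append_assoc]
        simpa using h2.trans h3
  have hc : ∀ z : List A, ∃ s : List Q, (∃ t : List Q, M.actW t (List.replicate k a) = z) →
      M.actW s (List.replicate k a) = z := by
    intro z
    by_cases h : ∃ t : List Q, M.actW t (List.replicate k a) = z
    · exact ⟨h.choose, fun _ => h.choose_spec⟩
    · exact ⟨[], fun h' => absurd h' h⟩
  choose sz hsz using hc
  obtain ⟨i, j, hij, h⟩ := M.exists_DE_of_bounded hg a (S := List.Vector A k × List.Vector A n)
    (fun j => k + (n + j))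
    (fun j σ => M.actW (sz σ.1.1) (List.replicate (k + j) a) ++ σ.2.1) (by
      intro j t
      have hz := hsz _ ⟨t, rfl⟩
      have e : M.actW t (List.replicate (k + (n + j)) a) =
          M.actW (sz (M.actW t (List.replicate k a))) (List.replicate k a) ++
            M.actW (M.stW t (List.replicate k a)) (List.replicate (n + j) a) := by
        rw [hz, ← actW_append, ← List.replicate_add]
      obtain ⟨w, hw, h⟩ := step (sz (M.actW t (List.replicate k a))) j
        (M.actW (M.stW t (List.replicate k a)) (List.replicate (n + j) a))
        (by simp [actW_length]) (by rw [← e]; exact ⟨_, _, rfl⟩)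
      refine ⟨(⟨M.actW t (List.replicate k a), by simp [actW_length]⟩, ⟨w, hw⟩), ?_⟩
      rw [e]
      exact h.2.2)
  exact ⟨_, _, by omega, h⟩

/-- If the orbit of `a ^ ω` is infinite, then with the stable lengths `k`, `n`, after any `z` some
admissible letter `p` never replaces the first letter of `v`. -/
theorem exists_separated [Finite Q] [Fintype A] [Nonempty A] (M : Mealy Q A)
    (hg : M.SelfInvertible) (a : A)
    (horb : Set.Infinite {ξ : ℕ → A | ∃ s : List Q, ξ = M.actSeq s (fun _ => a)})
    {k n : ℕ}
    (hst : ∀ y z v x : List A, z.length = k → v.length = n →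
      y ++ z ++ (v ++ x) ∈ M.Lan a → M.CC a (y ++ z) (v ++ x) = M.CC a z v)
    (z v : List A) (hz : z.length = k) (hv : v.length = n) (hzv : z ++ v ∈ M.Lan a) :
    ∃ p ∈ M.Ch a z, p ∉ M.CC a z v := by
  by_contra! hcon
  have hfull : ∀ z' v' : List A, z'.length = k → v'.length = n → z' ++ v' ∈ M.Lan a →
      M.CC a z' v' = M.Ch a z' := by
    intro z' v' hz' hv' h'
    refine Set.eq_of_subset_of_ncard_le (M.CC_subset_Ch a h') ?_ (M.Ch_finite a _)
    calc (M.Ch a z').ncard ≤ (M.Ch a z).ncard :=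
          M.Ch_ncard_le hg a (M.Lan_append a h').1 (M.Lan_append a hzv).1 (by omega)
      _ ≤ (M.CC a z v).ncard := Set.ncard_le_ncard hcon (M.CC_finite a _ _)
      _ ≤ (M.CC a z' v').ncard := M.CC_ncard_le hg a hzv h' (by omega) (by omega)
  obtain ⟨i, j, hij, h⟩ := M.exists_DE_of_full hg a k n (by
    intro Z V p hZ hV hmem hp
    obtain ⟨y, z', rfl, hz'⟩ : ∃ y z', Z = y ++ z' ∧ z'.length = k :=
      ⟨Z.take (Z.length - k), Z.drop (Z.length - k), by simp, by simp; omega⟩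
    obtain ⟨v', x, rfl, hv'⟩ : ∃ v' x, V = v' ++ x ∧ v'.length = n :=
      ⟨V.take n, V.drop n, by simp, by simp; omega⟩
    have hmem' : z' ++ v' ∈ M.Lan a := by
      have : y ++ (z' ++ v') ++ x ∈ M.Lan a := by simpa using hmem
      exact (M.Lan_append a (M.Lan_append a this).1).2
    have hp' : p ∈ M.Ch a z' := by
      refine ⟨hp.1, ?_⟩
      have := hp.2
      rw [List.append_assoc] at this
      exact (M.Lan_append a this).2
    rw [← hfull z' v' hz' hv' hmem', ← hst y z' v' x hz' hv' hmem] at hp'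
    exact hp'.2)
  exact horb (M.orbit_finite a hij h)

/-- There is a recurrent word `z` of length `k` in the language: every continuation of `z` can be
prolonged so as to end with `z` again. Take `z` with the fewest words of length `k` reachable
from it. -/
theorem exists_recurrent [Finite A] (M : Mealy Q A) (a : A) {K : ℕ}
    (hK : ∀ y z w : List A, K ≤ z.length → y ++ z ∈ M.Lan a →
      (y ++ z ++ w ∈ M.Lan a ↔ z ++ w ∈ M.Lan a)) {k : ℕ} (hk : K ≤ k) :
    ∃ z : List A, z.length = k ∧ z ∈ M.Lan a ∧ ∀ u, z ++ u ∈ M.Lan a →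
      ∃ u', z ++ (u ++ u') ∈ M.Lan a ∧ z <:+ z ++ (u ++ u') := by
  let R : List A → Set (List A) :=
    fun z => {z' | z'.length = k ∧ ∃ u, z ++ u ∈ M.Lan a ∧ z' <:+ z ++ u}
  have hR : ∀ z, (R z).Finite := fun z => finite_of_length k fun _ h => h.1
  obtain ⟨z, ⟨hzk, hz⟩, hmin⟩ := (measure fun z => (R z).ncard).wf.has_min
    {z | z.length = k ∧ z ∈ M.Lan a}
    ⟨List.replicate k a, by simp, M.replicate_mem_Lan a k⟩
  refine ⟨z, hzk, hz, fun u hu => ?_⟩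
  obtain ⟨t, z', he, hz'⟩ : ∃ t z', z ++ u = t ++ z' ∧ z'.length = k :=
    ⟨(z ++ u).take ((z ++ u).length - k), (z ++ u).drop ((z ++ u).length - k), by simp,
      by simp; omega⟩
  have htz : t ++ z' ∈ M.Lan a := he ▸ hu
  have lift : ∀ u', z' ++ u' ∈ M.Lan a → z ++ (u ++ u') ∈ M.Lan a ∧
      z' ++ u' <:+ z ++ (u ++ u') := by
    intro u' hu'
    rw [← List.append_assoc, he]
    exact ⟨(hK t z' u' (by omega) htz).2 hu', ⟨t, by simp⟩⟩
  have hsub : R z' ⊆ R z := by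
    rintro z'' ⟨h1, u', h2, h3⟩
    exact ⟨h1, u ++ u', (lift u' h2).1, h3.trans (lift u' h2).2⟩
  have hle : (R z).ncard ≤ (R z').ncard := not_lt.1 (hmin z' ⟨hz', (M.Lan_append a htz).2⟩)
  have heq := Set.eq_of_subset_of_ncard_le hsub hle (hR z)
  have hself : z ∈ R z := ⟨hzk, [], by simpa using hz, by simp⟩
  rw [← heq] at hself
  obtain ⟨-, u', h2, h3⟩ := hself
  exact ⟨u', (lift u' h2).1, h3.trans (lift u' h2).2⟩

end Separation

/-! ### Words in two generators -/

section Free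

variable {Q A : Type*}

/-- The word obtained by substituting `x` for `true` and `y` for `false`. -/
def ev (x y : List A) : List Bool → List A
  | [] => []
  | b :: l => (bif b then x else y) ++ ev x y l

theorem ev_append (x y : List A) (l l' : List Bool) :
    ev x y (l ++ l') = ev x y l ++ ev x y l' := by
  induction l with
  | nil => rfl
  | cons b l ih => simp [ev, ih]

theorem ev_length {x y : List A} (h : x.length = y.length) {l l' : List Bool}
    (hl : l.length = l'.length) : (ev x y l).length = (ev x y l').length := by
  have key : ∀ l : List Bool, (ev x y l).length = l.length * x.length := by
    intro l
    induction l with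
    | nil => simp [ev]
    | cons b l ih => cases b <;> simp [ev, ih, ← h] <;> ring
  rw [key, key, hl]

theorem evalPair_mk (M : Mealy Q A) (x y : List A) (l : List Bool) :
    evalPair (M.DM'mk x) (M.DM'mk y) l = M.DM'mk (ev x y l) := by
  induction l with
  | nil => rfl
  | cons b l ih =>
    cases b
    · simp only [evalPair, ih, ev, cond_false]; rfl
    · simp only [evalPair, ih, ev, cond_true]; rfl

/-- It suffices to separate words of equal length. If `l₁` is shorter than `l₂` and they represent
the same element, so do `l₁ b l₂` and `l₂ b l₁` for every letter `b`; these are distinct when `b`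
differs from the letter of `l₂` following its prefix of length `|l₁|`. -/
theorem isFreePair_of_same_length (M : Mealy Q A) (x y : List A)
    (h : ∀ l₁ l₂ : List Bool, l₁.length = l₂.length → M.DE (ev x y l₁) (ev x y l₂) → l₁ = l₂) :
    IsFreePair (M.DM'mk x) (M.DM'mk y) := by
  have main : ∀ l₁ l₂ : List Bool, M.DE (ev x y l₁) (ev x y l₂) → ¬ l₁.length < l₂.length := by
    intro l₁ l₂ hD hlt
    let b : Bool := !l₂[l₁.length]
    have e := h (l₁ ++ b :: l₂) (l₂ ++ b :: l₁) (by simp; omega) (by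
      have e1 : ∀ l : List Bool, b :: l = [b] ++ l := fun l => rfl
      rw [e1 l₂, e1 l₁, ev_append, ev_append, ev_append, ev_append]
      exact hD.append ((DE.refl M _).append hD.symm))
    have e2 : (l₁ ++ b :: l₂)[l₁.length]? = (l₂ ++ b :: l₁)[l₁.length]? := by rw [e]
    rw [List.getElem?_append_right le_rfl, List.getElem?_append_left hlt,
      List.getElem?_eq_getElem hlt] at e2
    simp [b] at e2
  intro l₁ l₂ _ _ he
  rw [evalPair_mk, evalPair_mk, DM'mk_eq_iff] at he
  have h1 := main _ _ he
  have h2 := main _ _ he.symm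
  exact h l₁ l₂ (by omega) he

end Free

end Mealy

/-- For a self-invertible Mealy automaton `M` and a letter `a` whose
orbit `P_M · a^ω` is infinite, there exist words `x, y ∈ A*` whose `~D`-classes freely
generate a free subsemigroup of rank two in `D'_M`. -/
theorem stmt18 {Q A : Type*} [Fintype Q] [Nonempty Q] [Fintype A] [Nonempty A]
    (M : Mealy Q A) (hg : M.SelfInvertible) (a : A)
    (horb : Set.Infinite {ξ : ℕ → A | ∃ s : List Q, ξ = M.actSeq s (fun _ => a)}) :
    ∃ x y : List A, IsFreePair (M.DM'mk x) (M.DM'mk y) := by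
  obtain ⟨K, hK⟩ := M.exists_memory hg a
  obtain ⟨k, n, hk, hst⟩ := M.exists_stable hg a hK
  obtain ⟨z, hzk, hz, hrec⟩ := M.exists_recurrent a hK hk
  obtain ⟨v, hvn, hzv⟩ : ∃ v : List A, v.length = n ∧ z ++ v ∈ M.Lan a := by
    obtain ⟨s, hs⟩ := (M.mem_Lan_iff a z).1 hz
    refine ⟨M.actW (M.stW s (List.replicate z.length a)) (List.replicate n a),
      by simp [Mealy.actW_length], z.length + n, s, ?_⟩
    rw [List.replicate_add, Mealy.actW_append, ← hs]
  obtain ⟨c, hc, hcv⟩ := M.exists_separated hg a horb hst z v hzk hvn hzv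
  obtain ⟨v', hx, hxs⟩ := hrec v hzv
  obtain ⟨c', hy, hys⟩ := hrec c hc.2
  have good : ∀ x : List A, z ++ x ∈ M.Lan a → z <:+ z ++ x → ∀ Z, Z ∈ M.Lan a → z <:+ Z →
      Z ++ x ∈ M.Lan a ∧ z <:+ Z ++ x := by
    rintro x h1 h2 _ hZ ⟨y, rfl⟩
    refine ⟨(hK y z x (by omega) hZ).2 h1, h2.trans ⟨y, by simp⟩⟩
  -- The two products of the loops `v v'` and `c c'` at `z` have equal lengths.
  let x := v ++ v' ++ (c ++ c')
  let y := c ++ c' ++ (v ++ v')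
  have hxy : x.length = y.length := by simp [x, y]; omega
  have gx : ∀ Z, Z ∈ M.Lan a → z <:+ Z → Z ++ x ∈ M.Lan a ∧ z <:+ Z ++ x := by
    intro Z h1 h2
    have h3 := good _ hx hxs Z h1 h2
    have h4 := good _ hy hys _ h3.1 h3.2
    simpa [x] using h4
  have gy : ∀ Z, Z ∈ M.Lan a → z <:+ Z → Z ++ y ∈ M.Lan a ∧ z <:+ Z ++ y := by
    intro Z h1 h2
    have h3 := good _ hy hys Z h1 h2
    have h4 := good _ hx hxs _ h3.1 h3.2
    simpa [y] using h4
  have gev : ∀ l Z, Z ∈ M.Lan a → z <:+ Z →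
      Z ++ Mealy.ev x y l ∈ M.Lan a ∧ z <:+ Z ++ Mealy.ev x y l := by
    intro l
    induction l with
    | nil => intro Z h1 h2; simpa [Mealy.ev] using And.intro h1 h2
    | cons b l ih =>
      intro Z h1 h2
      cases b
      · simpa [Mealy.ev] using ih _ (gy Z h1 h2).1 (gy Z h1 h2).2
      · simpa [Mealy.ev] using ih _ (gx Z h1 h2).1 (gx Z h1 h2).2
  have hF : ∀ Z, Z ∈ M.Lan a → z <:+ Z → ∀ w, Z ++ w ∈ M.Lan a ↔ z ++ w ∈ M.Lan a := by
    rintro _ hZ ⟨t, rfl⟩ w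
    exact hK t z w (by omega) hZ
  have sep : ∀ l₁ l₂ Z, l₁.length = l₂.length → Z ∈ M.Lan a → z <:+ Z →
      ¬ M.DE (Z ++ (x ++ Mealy.ev x y l₁)) (Z ++ (y ++ Mealy.ev x y l₂)) := by
    intro l₁ l₂ Z hl hZ hzZ hD
    have m1 := gev (true :: l₁) Z hZ hzZ
    have m2 := gev (false :: l₂) Z hZ hzZ
    simp only [Mealy.ev, cond_true, cond_false] at m1 m2
    have hE : M.EQ a (Z ++ (x ++ Mealy.ev x y l₁)) (Z ++ (y ++ Mealy.ev x y l₂)) :=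
      ⟨by simp [hxy, Mealy.ev_length hxy hl],
        fun w => (hF _ m1.1 m1.2 w).trans (hF _ m2.1 m2.2 w).symm, hD⟩
    obtain ⟨t, rfl⟩ := hzZ
    have ex : x ++ Mealy.ev x y l₁ = v ++ (v' ++ (c ++ c') ++ Mealy.ev x y l₁) := by simp [x]
    have ey : y ++ Mealy.ev x y l₂ = c ++ (c' ++ (v ++ v') ++ Mealy.ev x y l₂) := by simp [y]
    rw [ex, ey] at hE
    rw [ex] at m1
    refine hcv ?_
    rw [← hst t z v _ hzk hvn m1.1]
    exact ⟨hc.1, _, hE⟩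
  refine ⟨x, y, M.isFreePair_of_same_length x y ?_⟩
  have main : ∀ l₁ l₂ : List Bool, ∀ Z, l₁.length = l₂.length → Z ∈ M.Lan a → z <:+ Z →
      M.DE (Z ++ Mealy.ev x y l₁) (Z ++ Mealy.ev x y l₂) → l₁ = l₂ := by
    intro l₁
    induction l₁ with
    | nil => intro l₂ Z hl _ _ _; exact (List.length_eq_zero_iff.1 hl.symm).symm
    | cons b l₁ ih =>
      intro l₂ Z hl hZ hzZ hD
      cases l₂ with
      | nil => simp at hl
      | cons b' l₂ =>
        have hl' : l₁.length = l₂.length := by simpa using hl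
        cases b <;> cases b' <;> simp only [Mealy.ev, cond_true, cond_false] at hD
        · rw [← List.append_assoc Z y, ← List.append_assoc Z y] at hD
          rw [ih l₂ _ hl' (gy Z hZ hzZ).1 (gy Z hZ hzZ).2 hD]
        · exact absurd hD.symm (sep l₂ l₁ Z hl'.symm hZ hzZ)
        · exact absurd hD (sep l₁ l₂ Z hl' hZ hzZ)
        · rw [← List.append_assoc Z x, ← List.append_assoc Z x] at hD
          rw [ih l₂ _ hl' (gx Z hZ hzZ).1 (gx Z hZ hzZ).2 hD]
  exact fun l₁ l₂ hl hD =>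
    main l₁ l₂ z hl hz (List.suffix_refl z) ((Mealy.DE.refl M z).append hD)

end AutGrp
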